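/- Let ε, δ be real parameters and consider the two-degrees-of-freedom KdV map: p̄₁ = p₁ + εδ/(ε−q₁) − εδ/(ε+q₁+q₂), p̄₂ = p₂ + εδ/(ε−q₂) − εδ/(ε+q₁+q₂), q̄₁ = q₁ − εδ/(ε−p̄₁) + εδ/(ε+p̄₁−p̄₂), q̄₂ = q₂ + εδ/(ε+p̄₂) − εδ/(ε+p̄₁−p̄₂), defined wherever all denominators are nonzero. Then the function 𝒫₁(q₁,q₂,p₁,p₂) = (δ²ε²/8)·[x₁(3y₀+3y₁−y₂) + x₂(3y₀+3y₂−y₁) + x₃(3y₁+3y₂−y₀)] + (δε/2)·[x₁x₂y₀(y₂−y₁) + x₁x₃y₁(y₀−y₂) + x₂x₃y₂(y₁−y₀)] + x₁x₂x₃y₀y₁y₂, with x₁ = ε−p₁, x₂ = ε+p₂, x₃ = ε+p₁−p₂, y₀ = ε+q₁+q₂, y₁ = ε−q₁, y₂ = ε−q₂, is invariant under this map: 𝒫₁(q̄₁,q̄₂,p̄₁,p̄₂) = 𝒫₁(q₁,q₂,p₁,p₂). -/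

import Mathlib

noncomputable section

/-- The first invariant `𝒫₁` of the two-degrees-of-freedom KdV map, in the
abbreviations `x₁ = ε−p₁`, `x₂ = ε+p₂`, `x₃ = ε+p₁−p₂`, `y₀ = ε+q₁+q₂`,
`y₁ = ε−q₁`, `y₂ = ε−q₂`. -/
def kdv2P1 (ε δ q1 q2 p1 p2 : ℝ) : ℝ :=
  let x1 := ε - p1; let x2 := ε + p2; let x3 := ε + p1 - p2
  let y0 := ε + q1 + q2; let y1 := ε - q1; let y2 := ε - q2
  δ ^ 2 * ε ^ 2 / 8 *
      (x1 * (3 * y0 + 3 * y1 - y2) + x2 * (3 * y0 + 3 * y2 - y1) +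
        x3 * (3 * y1 + 3 * y2 - y0)) +
    δ * ε / 2 *
      (x1 * x2 * y0 * (y2 - y1) + x1 * x3 * y1 * (y0 - y2) + x2 * x3 * y2 * (y1 - y0)) +
    x1 * x2 * x3 * y0 * y1 * y2

/-!
Arranged cyclically as `x₁, y₀, x₂, y₂, x₃, y₁`, the variables become two 3-periodic sequences
`a = (x₁, x₂, x₃)` and `b = (y₀, y₂, y₁)`. With `c = εδ` the map is
`a'ᵢ = aᵢ + c/bᵢ - c/bᵢ₋₁` followed by `b'ᵢ = bᵢ + c/a'ᵢ₊₁ - c/a'ᵢ`: the same half step twice, up to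
relabelling.

For `u - v = c` the half step exchanges the weights `u` and `v` in the monodromy
`∏ᵢ [aᵢ, u; 1, 0] [bᵢ, v; 1, 0]`, up to conjugation by a unipotent matrix. Two half steps therefore
preserve its trace, at any period and for every such `u` and `v`. Finally `𝒫₁` is this trace at
`u = -v = c/2`, up to a constant: the difference is `c²/8 · (∑ aᵢ) (∑ bᵢ)`, and both sums are `3ε`.
-/

section CyclicProducts

variable {n : ℕ}

theorem mul_prod_range_eq_prod_range_mul {M : Type*} [Monoid M] {g L L' : ZMod n → M}
    (h : ∀ i, g i * L i = L' i * g (i + 1)) (m : ℕ) :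
    g 0 * ((List.range m).map fun i : ℕ => L i).prod =
      ((List.range m).map fun i : ℕ => L' i).prod * g m := by
  induction m with
  | zero => simp
  | succ m ih =>
    rw [List.prod_range_succ, List.prod_range_succ, ← mul_assoc, ih, mul_assoc, h, mul_assoc,
      Nat.cast_succ]

variable {ι R : Type*} [Fintype ι] [DecidableEq ι] [CommRing R]

theorem trace_prod_range_eq_of_gauge {g L L' : ZMod n → Matrix ι ι R}
    (hg : IsUnit (g 0)) (h : ∀ i, g i * L i = L' i * g (i + 1)) :
    ((List.range n).map fun i : ℕ => L i).prod.trace =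
      ((List.range n).map fun i : ℕ => L' i).prod.trace := by
  obtain ⟨γ, hγ⟩ := hg
  have intertwine := mul_prod_range_eq_prod_range_mul h n
  rw [ZMod.natCast_self, ← hγ] at intertwine
  rw [← Matrix.trace_units_conj γ, intertwine, Units.mul_inv_cancel_right]

theorem trace_prod_range_mul_comm (A B : ZMod n → Matrix ι ι R) :
    ((List.range n).map fun i : ℕ => A i * B i).prod.trace =
      ((List.range n).map fun i : ℕ => B i * A (i + 1)).prod.trace := by
  cases n with
  | zero => rfl
  | succ m =>
    have regroup := mul_prod_range_eq_prod_range_mul (g := A) (L := fun i => B i * A (i + 1))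
      (fun i => (mul_assoc (A i) (B i) (A (i + 1))).symm) m
    have wrap : (m : ZMod (m + 1)) + 1 = 0 := by exact_mod_cast ZMod.natCast_self (m + 1)
    rw [List.prod_range_succ, List.prod_range_succ, ← mul_assoc, ← regroup, mul_assoc,
      Matrix.trace_mul_comm, wrap, mul_assoc]

end CyclicProducts

section LatticeKdV

variable {n : ℕ} {R K : Type*} [CommRing R] [Field K]

/-- The `2 × 2` transfer matrix with entry `z` and weight `w`, the building block of the Lax
matrices of the periodic lattice KdV equation. -/
def kdvTransfer (z w : R) : Matrix (Fin 2) (Fin 2) R :=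
  !![z, w; 1, 0]

/-- The monodromy matrix of the pair of `n`-periodic sequences `a`, `b`, ordered as
`a₀, b₀, a₁, b₁, …`. The sum `u + v` plays the role of the spectral parameter, the difference
`u - v` being the parameter of the map. -/
def kdvMonodromy (u v : R) (a b : ZMod n → R) : Matrix (Fin 2) (Fin 2) R :=
  ((List.range n).map fun i : ℕ => kdvTransfer (a i) u * kdvTransfer (b i) v).prod

/-- The half step `aᵢ ↦ aᵢ + c/bᵢ - c/bᵢ₋₁` of the periodic KdV map, in which `b` is kept fixed;
it is meaningful when no `bᵢ` vanishes. -/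
def kdvHalfStep (c : K) (a b : ZMod n → K) : ZMod n → K :=
  fun i => a i + c / b i - c / b (i - 1)

/-- The unipotent gauge matrix relating the Lax matrices before and after a half step. -/
def kdvGauge (t : R) : Matrix (Fin 2) (Fin 2) R :=
  !![1, t; 0, 1]

theorem isUnit_kdvGauge (t : R) : IsUnit (kdvGauge t) := by
  simp [Matrix.isUnit_iff_isUnit_det, kdvGauge]

theorem kdvGauge_mul_transfer {u v b t : R} (a s : R) (h : v = u + b * t) :
    kdvGauge s * (kdvTransfer a u * kdvTransfer b v) =
      kdvTransfer (a - t + s) v * kdvTransfer b u * kdvGauge t := by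
  subst h
  simp only [kdvGauge, kdvTransfer, Matrix.mul_fin_two]
  ring_nf

theorem trace_kdvMonodromy_halfStep (u v : K) (a : ZMod n → K) {b : ZMod n → K}
    (hb : ∀ i, b i ≠ 0) :
    (kdvMonodromy u v a b).trace =
      (kdvMonodromy v u (kdvHalfStep (u - v) a b) b).trace := by
  refine trace_prod_range_eq_of_gauge (g := fun i => kdvGauge ((v - u) / b (i - 1)))
    (L := fun i => kdvTransfer (a i) u * kdvTransfer (b i) v)
    (L' := fun i => kdvTransfer (kdvHalfStep (u - v) a b i) v * kdvTransfer (b i) u)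
    (isUnit_kdvGauge _) fun i => ?_
  have halfStep_eq : kdvHalfStep (u - v) a b i = a i - (v - u) / b i + (v - u) / b (i - 1) := by
    simp only [kdvHalfStep]; ring
  rw [halfStep_eq, add_sub_cancel_right]
  exact kdvGauge_mul_transfer _ _ (by rw [mul_div_cancel₀ _ (hb i), add_sub_cancel])

theorem trace_kdvMonodromy_swap (u v : R) (a b : ZMod n → R) :
    (kdvMonodromy u v a b).trace = (kdvMonodromy v u b fun i => a (i + 1)).trace :=
  trace_prod_range_mul_comm (fun i => kdvTransfer (a i) u) fun i => kdvTransfer (b i) v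

theorem trace_kdvMonodromy_step {u v : K} {a b a' b' : ZMod n → K}
    (ha' : a' = kdvHalfStep (u - v) a b)
    (hb' : b' = kdvHalfStep (u - v) b fun i => a' (i + 1))
    (hb : ∀ i, b i ≠ 0) (ha'_ne : ∀ i, a' i ≠ 0) :
    (kdvMonodromy u v a' b').trace = (kdvMonodromy u v a b).trace :=
  calc (kdvMonodromy u v a' b').trace
      = (kdvMonodromy v u b' fun i => a' (i + 1)).trace := trace_kdvMonodromy_swap u v a' b'
    _ = (kdvMonodromy u v b fun i => a' (i + 1)).trace := by
        rw [hb', ← trace_kdvMonodromy_halfStep u v b fun i => ha'_ne (i + 1)]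
    _ = (kdvMonodromy v u a' b).trace := (trace_kdvMonodromy_swap v u a' b).symm
    _ = (kdvMonodromy u v a b).trace := by rw [ha', ← trace_kdvMonodromy_halfStep u v a hb]

end LatticeKdV

section TwoDegreesOfFreedom

/-- The cyclic sequence `(x₁, x₂, x₃)` attached to the momenta. -/
def kdv2X (ε p1 p2 : ℝ) : ZMod 3 → ℝ :=
  ![ε - p1, ε + p2, ε + p1 - p2]

/-- The cyclic sequence attached to the positions, in the order `(y₀, y₂, y₁)` in which it
interlaces with `kdv2X`. -/
def kdv2Y (ε q1 q2 : ℝ) : ZMod 3 → ℝ :=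
  ![ε + q1 + q2, ε - q2, ε - q1]

theorem kdvHalfStep_kdv2X (ε c q1 q2 p1 p2 : ℝ) :
    kdvHalfStep c (kdv2X ε p1 p2) (kdv2Y ε q1 q2) =
      kdv2X ε (p1 + c / (ε - q1) - c / (ε + q1 + q2)) (p2 + c / (ε - q2) - c / (ε + q1 + q2)) := by
  funext (i : Fin 3)
  fin_cases i
  · change ε - p1 + c / (ε + q1 + q2) - c / (ε - q1) = ε - (_ + _ - _)
    ring
  · change ε + p2 + c / (ε - q2) - c / (ε + q1 + q2) = ε + (_ + _ - _)
    ring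
  · change ε + p1 - p2 + c / (ε - q1) - c / (ε - q2) = ε + (_ + _ - _) - (_ + _ - _)
    ring

theorem kdvHalfStep_kdv2Y (ε c q1 q2 p1 p2 : ℝ) :
    (kdvHalfStep c (kdv2Y ε q1 q2) fun i => kdv2X ε p1 p2 (i + 1)) =
      kdv2Y ε (q1 - c / (ε - p1) + c / (ε + p1 - p2)) (q2 + c / (ε + p2) - c / (ε + p1 - p2)) := by
  funext (i : Fin 3)
  fin_cases i
  · change ε + q1 + q2 + c / (ε + p2) - c / (ε - p1) = ε + (_ - _ + _) + (_ + _ - _)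
    ring
  · change ε - q2 + c / (ε + p1 - p2) - c / (ε + p2) = ε - (_ + _ - _)
    ring
  · change ε - q1 + c / (ε - p1) - c / (ε + p1 - p2) = ε - (_ - _ + _)
    ring

theorem kdv2P1_eq_trace_kdvMonodromy (ε δ q1 q2 p1 p2 : ℝ) :
    kdv2P1 ε δ q1 q2 p1 p2 =
      (kdvMonodromy (ε * δ / 2) (-(ε * δ / 2)) (kdv2X ε p1 p2) (kdv2Y ε q1 q2)).trace +
        9 / 8 * ε ^ 4 * δ ^ 2 := by
  have hX0 : kdv2X ε p1 p2 (0 : ℕ) = ε - p1 := rfl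
  have hX1 : kdv2X ε p1 p2 (1 : ℕ) = ε + p2 := rfl
  have hX2 : kdv2X ε p1 p2 (2 : ℕ) = ε + p1 - p2 := rfl
  have hY0 : kdv2Y ε q1 q2 (0 : ℕ) = ε + q1 + q2 := rfl
  have hY1 : kdv2Y ε q1 q2 (1 : ℕ) = ε - q2 := rfl
  have hY2 : kdv2Y ε q1 q2 (2 : ℕ) = ε - q1 := rfl
  simp only [kdvMonodromy, List.prod_range_succ, List.range_zero, List.map_nil, List.prod_nil,
    one_mul, hX0, hX1, hX2, hY0, hY1, hY2, kdvTransfer, Matrix.mul_fin_two, Matrix.trace_fin_two_of,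
    kdv2P1]
  ring

end TwoDegreesOfFreedom

/-- `𝒫₁` is invariant under the two-degrees-of-freedom KdV map. -/
theorem kdv2_map_invariant_P1 (ε δ q1 q2 p1 p2 : ℝ)
    (h1 : ε - q1 ≠ 0) (h2 : ε - q2 ≠ 0) (h3 : ε + q1 + q2 ≠ 0)
    (pbar1 : ℝ)
    (hpbar1 : pbar1 = p1 + ε * δ / (ε - q1) - ε * δ / (ε + q1 + q2))
    (pbar2 : ℝ)
    (hpbar2 : pbar2 = p2 + ε * δ / (ε - q2) - ε * δ / (ε + q1 + q2))
    (h4 : ε - pbar1 ≠ 0) (h5 : ε + pbar2 ≠ 0) (h6 : ε + pbar1 - pbar2 ≠ 0)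
    (qbar1 : ℝ)
    (hqbar1 : qbar1 = q1 - ε * δ / (ε - pbar1) + ε * δ / (ε + pbar1 - pbar2))
    (qbar2 : ℝ)
    (hqbar2 : qbar2 = q2 + ε * δ / (ε + pbar2) - ε * δ / (ε + pbar1 - pbar2)) :
    kdv2P1 ε δ qbar1 qbar2 pbar1 pbar2 = kdv2P1 ε δ q1 q2 p1 p2 := by
  have hc : ε * δ / 2 - -(ε * δ / 2) = ε * δ := by ring
  have hY : ∀ i, kdv2Y ε q1 q2 i ≠ 0 :=
    Fin.forall_fin_succ.2 ⟨h3, Fin.forall_fin_two.2 ⟨h2, h1⟩⟩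
  have hX : ∀ i, kdv2X ε pbar1 pbar2 i ≠ 0 :=
    Fin.forall_fin_succ.2 ⟨h4, Fin.forall_fin_two.2 ⟨h5, h6⟩⟩
  have hX_step : kdv2X ε pbar1 pbar2 = kdvHalfStep (ε * δ) (kdv2X ε p1 p2) (kdv2Y ε q1 q2) := by
    rw [hpbar1, hpbar2, kdvHalfStep_kdv2X]
  have hY_step : kdv2Y ε qbar1 qbar2 =
      kdvHalfStep (ε * δ) (kdv2Y ε q1 q2) fun i => kdv2X ε pbar1 pbar2 (i + 1) := by
    rw [hqbar1, hqbar2, kdvHalfStep_kdv2Y]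
  rw [← hc] at hX_step hY_step
  rw [kdv2P1_eq_trace_kdvMonodromy, kdv2P1_eq_trace_kdvMonodromy,
    trace_kdvMonodromy_step hX_step hY_step hY hX]
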